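/- Let L be a finite index set, let a_l, b_l ∈ ℝ for l ∈ L, and let δ_r, δ_s ∈ ℝ. Then min( Σ_{l∈L} (b_l − min(a_l, b_l)) + δ_r , Σ_{l∈L} (a_l − min(a_l, b_l)) + δ_s ) ≥ min(δ_r, δ_s). Consequently, for any β ∈ ℝ, the omission of coverage progress after one weight-sharing step, δ_new := min( β − Σ_l a_l + δ_r , β − Σ_l b_l + δ_s ) − ( β − Σ_l max(a_l, b_l) ), satisfies δ_new ≥ min(δ_r, δ_s); in particular, if δ_r ≥ 0 and δ_s ≥ 0 then δ_new ≥ 0. (Key inequality in the proof of Proposition 3: the omission of the coverage progress is always nonnegative.) -/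

import Mathlib

/-!
Since `a ⊔ b - a = b - a ⊓ b`, the omission after a sharing step is the infimum of the two old
omissions, each increased by a sum of nonnegative terms `b - a ⊓ b` or `a - a ⊓ b`: what the other
agent has recorded and this one has not. Hence it is at least the infimum of the old omissions.
-/

namespace WeightSharing

variable {ι G : Type*} [Lattice G] [AddCommGroup G]

/-- The omission of coverage progress after agents `r` and `s` share weights at a sample-point of
initial weight `β`, where they have recorded the progress `a` and `b` with omissions `δr` and `δs`.
It is the excess of their smaller remaining weight, which the original method keeps, over
`β - ∑ l ∈ L, a l ⊔ b l`. Taking values in a lattice-ordered group covers several sample-points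
at once, with weights in `X → ℝ`. -/
def omission (L : Finset ι) (a b : ι → G) (δr δs β : G) : G :=
  (β - ∑ l ∈ L, a l + δr) ⊓ (β - ∑ l ∈ L, b l + δs) - (β - ∑ l ∈ L, a l ⊔ b l)

variable [IsOrderedAddMonoid G]

theorem sup_sub_left_eq_sub_inf (x y : G) : x ⊔ y - x = y - x ⊓ y := by
  rw [sub_eq_sub_iff_add_eq_add, add_comm, inf_add_sup, add_comm]

theorem sup_sub_right_eq_sub_inf (x y : G) : x ⊔ y - y = x - x ⊓ y := by
  rw [sup_comm, sup_sub_left_eq_sub_inf, inf_comm]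

theorem omission_eq_inf_sum_sub_inf (L : Finset ι) (a b : ι → G) (δr δs β : G) :
    omission L a b δr δs β =
      (∑ l ∈ L, (b l - a l ⊓ b l) + δr) ⊓ (∑ l ∈ L, (a l - a l ⊓ b l) + δs) := by
  have excess (c δ : G) : β - c + δ - (β - ∑ l ∈ L, a l ⊔ b l) = ∑ l ∈ L, a l ⊔ b l - c + δ := by
    abel
  simp only [omission, inf_sub, excess, ← Finset.sum_sub_distrib, sup_sub_left_eq_sub_inf,
    sup_sub_right_eq_sub_inf]

theorem inf_le_inf_sum_sub_inf (L : Finset ι) (a b : ι → G) (δr δs : G) :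
    δr ⊓ δs ≤ (∑ l ∈ L, (b l - a l ⊓ b l) + δr) ⊓ (∑ l ∈ L, (a l - a l ⊓ b l) + δs) :=
  inf_le_inf
    (le_add_of_nonneg_left <| Finset.sum_nonneg fun _ _ => sub_nonneg.2 inf_le_right)
    (le_add_of_nonneg_left <| Finset.sum_nonneg fun _ _ => sub_nonneg.2 inf_le_left)

theorem inf_le_omission (L : Finset ι) (a b : ι → G) (δr δs β : G) :
    δr ⊓ δs ≤ omission L a b δr δs β := by
  rw [omission_eq_inf_sum_sub_inf]
  exact inf_le_inf_sum_sub_inf L a b δr δs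

theorem omission_nonneg (L : Finset ι) (a b : ι → G) {δr δs : G} (hr : 0 ≤ δr) (hs : 0 ≤ δs)
    (β : G) : 0 ≤ omission L a b δr δs β :=
  (le_inf hr hs).trans (inf_le_omission L a b δr δs β)

end WeightSharing

open WeightSharing in
theorem stmt12_general {ι G : Type*} [Lattice G] [AddCommGroup G] [IsOrderedAddMonoid G]
    (L : Finset ι) (a b : ι → G) (δr δs : G) :
    ((∑ l ∈ L, (b l - a l ⊓ b l) + δr) ⊓ (∑ l ∈ L, (a l - a l ⊓ b l) + δs) ≥ δr ⊓ δs) ∧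
    ∀ β : G,
      ((β - ∑ l ∈ L, a l + δr) ⊓ (β - ∑ l ∈ L, b l + δs)
          - (β - ∑ l ∈ L, a l ⊔ b l) ≥ δr ⊓ δs) ∧
      (0 ≤ δr → 0 ≤ δs →
        0 ≤ (β - ∑ l ∈ L, a l + δr) ⊓ (β - ∑ l ∈ L, b l + δs)
          - (β - ∑ l ∈ L, a l ⊔ b l)) :=
  ⟨inf_le_inf_sum_sub_inf L a b δr δs, fun β =>
    ⟨inf_le_omission L a b δr δs β, fun hr hs => omission_nonneg L a b hr hs β⟩⟩

/-- Key inequality in the proof of Proposition 3: the omission of coverage progress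
after one weight-sharing step is at least `min(δ_r, δ_s)`, hence nonnegative whenever
`δ_r, δ_s ≥ 0`. -/
theorem stmt12 {ι : Type} (L : Finset ι) (a b : ι → ℝ) (δr δs : ℝ) :
    (min (∑ l ∈ L, (b l - min (a l) (b l)) + δr)
        (∑ l ∈ L, (a l - min (a l) (b l)) + δs) ≥ min δr δs) ∧
    ∀ β : ℝ,
      (min (β - ∑ l ∈ L, a l + δr) (β - ∑ l ∈ L, b l + δs)
          - (β - ∑ l ∈ L, max (a l) (b l)) ≥ min δr δs) ∧
      (0 ≤ δr → 0 ≤ δs →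
        0 ≤ min (β - ∑ l ∈ L, a l + δr) (β - ∑ l ∈ L, b l + δs)
          - (β - ∑ l ∈ L, max (a l) (b l))) := by
  exact stmt12_general L a b δr δs
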